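/- Let Γ = (G,σ) be a connected signed graph with underlying weighted graph G = (V,E,w,μ,κ), nonnegative potential κ ≥ 0, and signature σ : E → {−1,+1}. Let λ^σ_1 ≤ … ≤ λ^σ_n be the eigenvalues of the normalized signed Laplacian 𝔏^σ listed with multiplicity in ascending order, and let ℓ = |E| − |V| + 1 be the cyclomatic number of G. Then for every integer k with ℓ + 1 ≤ k ≤ n, the (k−ℓ)-way signed Cheeger constant satisfies ρ^σ_{k−ℓ}(Γ) ≤ √(2 τ_Γ λ^σ_k), where τ_Γ = max_{i∈V} d(i)/μ_i. -/

import Mathlib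

open BigOperators Matrix Polynomial

/-- Weighted degree `d(i) = ∑_j w_{ij}` (with `w` vanishing off edges). -/
noncomputable def wdeg {V : Type*} [Fintype V] (w : V → V → ℝ) (i : V) : ℝ := ∑ j, w i j

/-- The normalized signed Laplacian `𝔏^σ = M⁻¹ (D - A^σ + K)`, where `A^σ` has entries
`σ_{ij} w_{ij}`. -/
noncomputable def signedNormLap {V : Type*} [Fintype V] [DecidableEq V]
    (w : V → V → ℝ) (s : V → V → ℝ) (μ κ : V → ℝ) : Matrix V V ℝ :=
  (Matrix.diagonal μ)⁻¹ *
    (Matrix.diagonal (wdeg w) - Matrix.of (fun i j => s i j * w i j) + Matrix.diagonal κ)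

/-- `|E^+(V₁, V₂)|`: total weight of positive edges between `V₁` and `V₂`. -/
noncomputable def posEdgeWeight {V : Type*} [Fintype V]
    (w : V → V → ℝ) (s : V → V → ℝ) (V₁ V₂ : Finset V) : ℝ :=
  ∑ x ∈ V₁, ∑ y ∈ V₂, if s x y = 1 then w x y else 0

/-- `|E^-(V₁, V₂)|`: total weight of negative edges between `V₁` and `V₂`. -/
noncomputable def negEdgeWeight {V : Type*} [Fintype V]
    (w : V → V → ℝ) (s : V → V → ℝ) (V₁ V₂ : Finset V) : ℝ :=
  ∑ x ∈ V₁, ∑ y ∈ V₂, if s x y = -1 then w x y else 0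

/-- `|∂ S|`: total weight of the edge boundary of `S`. -/
noncomputable def boundaryWeight {V : Type*} [Fintype V] [DecidableEq V]
    (w : V → V → ℝ) (S : Finset V) : ℝ :=
  ∑ x ∈ S, ∑ y ∈ Sᶜ, w x y

/-- The quantity `β^σ(V₁, V₂)` associated to a sub-bipartition `(V₁, V₂)`. -/
noncomputable def signedBipartiteness {V : Type*} [Fintype V] [DecidableEq V]
    (w : V → V → ℝ) (s : V → V → ℝ) (μ : V → ℝ) (V₁ V₂ : Finset V) : ℝ :=
  (2 * posEdgeWeight w s V₁ V₂ + negEdgeWeight w s V₁ V₁ + negEdgeWeight w s V₂ V₂ +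
      boundaryWeight w (V₁ ∪ V₂)) / ∑ x ∈ V₁ ∪ V₂, μ x

/-- The `k`-way signed Cheeger constant `ρ^σ_k(Γ)`: infimum over `k`-sub-bipartitions of the
maximal `β^σ`. -/
noncomputable def signedCheeger {V : Type*} [Fintype V] [DecidableEq V]
    (k : ℕ) (w : V → V → ℝ) (s : V → V → ℝ) (μ : V → ℝ) : ℝ :=
  sInf {r | ∃ p : Fin k → Finset V × Finset V,
    (∀ i, Disjoint (p i).1 (p i).2 ∧ ((p i).1 ∪ (p i).2).Nonempty) ∧
    (Pairwise fun i j => Disjoint ((p i).1 ∪ (p i).2) ((p j).1 ∪ (p j).2)) ∧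
    r = ⨆ i, signedBipartiteness w s μ (p i).1 (p i).2}


lemma sub_ker {V : Type*} [Fintype V] {E : Type*} [AddCommGroup E] [Module ℝ E] [FiniteDimensional ℝ E]
    (W : Submodule ℝ (V → ℝ)) (φ : (V → ℝ) →ₗ[ℝ] E) :
    ∃ W' : Submodule ℝ (V → ℝ), W' ≤ W ∧ (∀ f ∈ W', φ f = 0) ∧
      Module.finrank ℝ W ≤ Module.finrank ℝ W' + Module.finrank ℝ E := by
  refine ⟨(LinearMap.ker (φ.domRestrict W)).map W.subtype, Submodule.map_subtype_le _ _, ?_, ?_⟩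
  · rintro f ⟨g, hg, rfl⟩
    simpa using hg
  · rw [Submodule.finrank_map_subtype_eq]
    have h1 := LinearMap.finrank_range_add_finrank_ker (φ.domRestrict W)
    have h2 := Submodule.finrank_le (LinearMap.range (φ.domRestrict W))
    omega

/-- Expansion of the quadratic form along one coordinate. -/
lemma form_expand {V : Type*} [Fintype V] [DecidableEq V] (H : Matrix V V ℝ) (hH : H.IsSymm)
    (x : V) (a : ℝ) (f : V → ℝ) :
    (f + a • Pi.single x 1) ⬝ᵥ (H *ᵥ (f + a • Pi.single x 1)) =
      f ⬝ᵥ (H *ᵥ f) + 2 * a * (H x ⬝ᵥ f) + H x x * a ^ 2 := by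
  have h1 : f ⬝ᵥ H *ᵥ (Pi.single x 1) = H x ⬝ᵥ f := by
    simp only [dotProduct, mulVec_single_one, Matrix.col_apply]
    exact Finset.sum_congr rfl fun i _ => by rw [hH.apply, mul_comm]
  have h2 : (H *ᵥ f) x = H x ⬝ᵥ f := rfl
  simp only [mulVec_add, mulVec_smul, dotProduct_add, add_dotProduct, smul_dotProduct,
    dotProduct_smul, h1, single_one_dotProduct, h2, smul_eq_mul]
  simp
  ring

lemma forest_lemma {V : Type*} [Fintype V] [DecidableEq V] (d : V → ℕ) (p : V → V) (m : ℕ) :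
    ∀ (S : Finset V), S.card = m → ∀ H : Matrix V V ℝ, H.IsSymm →
      (∀ i ∈ S, ∀ j ∈ S, i ≠ j → H i j ≠ 0 → (j = p i ∧ d j < d i) ∨ (i = p j ∧ d i < d j)) →
      ∀ (k : ℕ) (W : Submodule ℝ (V → ℝ)), k ≤ Module.finrank ℝ W →
        (∀ f ∈ W, ∀ v, v ∉ S → f v = 0) → (∀ f ∈ W, f ⬝ᵥ (H *ᵥ f) ≤ 0) →
        ∃ g : Fin k → V → ℝ, (∀ i, g i ≠ 0) ∧ (∀ i, ∀ v, v ∉ S → g i v = 0) ∧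
          (∀ i j, i ≠ j → ∀ v, g i v = 0 ∨ g j v = 0) ∧ ∀ i, g i ⬝ᵥ (H *ᵥ g i) ≤ 0 := by
  induction m with
  | zero =>
    intro S hS H _ _ k W hk hW _
    rw [Finset.card_eq_zero] at hS
    subst hS
    have : W = ⊥ := by
      rw [Submodule.eq_bot_iff]
      intro f hf
      ext v
      exact hW f hf v (by simp)
    subst this
    rw [finrank_bot] at hk
    obtain rfl : k = 0 := by omega
    exact ⟨fun i => i.elim0, fun i => i.elim0, fun i => i.elim0, fun i => i.elim0, fun i => i.elim0⟩
  | succ m ih =>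
    intro S hS H hH hT k W hk hW hq
    obtain ⟨x, hxS, hxmax⟩ := S.exists_max_image d (Finset.card_pos.mp (by omega))
    have hcard : (S.erase x).card = m := by rw [Finset.card_erase_of_mem hxS]; omega
    have hleaf : ∀ j ∈ S, j ≠ x → H x j ≠ 0 → j = p x := by
      intro j hj hjx h
      rcases hT x hxS j hj hjx.symm h with h | h
      · exact h.1
      · have := hxmax j hj
        omega
    rcases le_or_gt (H x x) 0 with hx | hx
    · cases k with
      | zero => exact ⟨fun i => i.elim0, fun i => i.elim0, fun i => i.elim0, fun i => i.elim0, fun i => i.elim0⟩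
      | succ k =>
        obtain ⟨W', hW'W, hW'x, hW'r⟩ := sub_ker W (LinearMap.proj x : (V → ℝ) →ₗ[ℝ] ℝ)
        rw [Module.finrank_self] at hW'r
        obtain ⟨g, g0, gS, gd, gq⟩ := ih (S.erase x) hcard H hH
          (fun i hi j hj => hT i (Finset.mem_of_mem_erase hi) j (Finset.mem_of_mem_erase hj)) k W'
          (by omega) (fun f hf v hv => by
            by_cases h : v = x
            · subst h; exact hW'x f hf
            · exact hW f (hW'W hf) v (fun h' => hv (Finset.mem_erase.2 ⟨h, h'⟩)))
          (fun f hf => hq f (hW'W hf))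
        have hgx : ∀ i, g i x = 0 := fun i => gS i x (by simp)
        refine ⟨Fin.cons (Pi.single x 1) g, ?_, ?_, ?_, ?_⟩
        · intro i
          refine Fin.cases ?_ (fun i => ?_) i
          · simp
          · simpa using g0 i
        · intro i
          refine Fin.cases ?_ (fun i => ?_) i
          · intro v hv
            have : v ≠ x := fun h => hv (h ▸ hxS)
            simp [this]
          · intro v hv
            simpa using gS i v (fun h => hv (Finset.mem_of_mem_erase h))
        · intro i j
          refine Fin.cases ?_ (fun i => ?_) i <;> refine Fin.cases ?_ (fun j => ?_) j
          · simp
          · intro _ v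
            by_cases h : v = x
            · right; subst h; simpa using hgx j
            · left; simp [h]
          · intro _ v
            by_cases h : v = x
            · left; subst h; simpa using hgx i
            · right; simp [h]
          · intro hij v
            simpa using gd i j (fun h => hij (by rw [h])) v
        · intro i
          refine Fin.cases ?_ (fun i => ?_) i
          · simpa using hx
          · simpa using gq i
    · set H' : Matrix V V ℝ := H - (H x x)⁻¹ • vecMulVec (H x) (H x) with hH'
      have hform : ∀ f : V → ℝ, f ⬝ᵥ (H' *ᵥ f) = f ⬝ᵥ (H *ᵥ f) - (H x x)⁻¹ * (H x ⬝ᵥ f) ^ 2 := by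
        intro f
        rw [hH', sub_mulVec, dotProduct_sub, smul_mulVec, dotProduct_smul, vecMulVec_mulVec]
        simp only [op_smul_eq_smul, dotProduct_smul, smul_eq_mul]
        rw [dotProduct_comm f (H x)]
        ring
      have hsymm' : H'.IsSymm := by
        ext i j
        simp only [hH', transpose_apply, Matrix.sub_apply, Matrix.smul_apply, vecMulVec_apply, hH.apply i j, smul_eq_mul]
        ring
      let φ : (V → ℝ) →ₗ[ℝ] (V → ℝ) :=
        LinearMap.id - (LinearMap.single ℝ (fun _ : V => ℝ) x).comp (LinearMap.proj x)
      have hφ : ∀ f : V → ℝ, f = φ f + f x • Pi.single x 1 := by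
        intro f
        ext v
        by_cases h : v = x
        · subst h; simp [φ]
        · simp [φ, h]
      have hφx : ∀ f : V → ℝ, φ f x = 0 := fun f => by simp [φ]
      have hφn : ∀ f : V → ℝ, ∀ v, v ≠ x → φ f v = f v := fun f v h => by simp [φ, h]
      have hinj : Function.Injective (φ.domRestrict W) := by
        rw [← LinearMap.ker_eq_bot, LinearMap.ker_eq_bot']
        rintro ⟨f, hf⟩ h0
        have h0' : φ f = 0 := h0
        have h1 := hq f hf
        have h2 := form_expand H hH x (f x) (φ f)
        rw [← hφ, h0'] at h2
        rw [h2] at h1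
        simp at h1
        have h3 : f x = 0 := by
          by_contra h
          have := mul_pos hx (sq_pos_of_ne_zero h)
          have : 0 < f x ^ 2 := sq_pos_of_ne_zero h
          nlinarith
        apply Subtype.ext
        change f = 0
        calc f = φ f + f x • Pi.single x 1 := hφ f
          _ = 0 := by rw [h0', h3]; simp
      obtain ⟨g, g0, gS, gd, gq⟩ := ih (S.erase x) hcard H' hsymm'
        (by
          intro i hi j hj hij hne
          apply hT i (Finset.mem_of_mem_erase hi) j (Finset.mem_of_mem_erase hj) hij
          intro h0
          apply hne
          simp only [hH', Matrix.sub_apply, Matrix.smul_apply, vecMulVec_apply, h0, smul_eq_mul]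
          by_contra hne
          have h1 : H x i ≠ 0 := fun h => hne (by simp [h])
          have h2 : H x j ≠ 0 := fun h => hne (by simp [h])
          rw [Finset.mem_erase] at hi hj
          exact hij ((hleaf i hi.2 hi.1 h1).trans (hleaf j hj.2 hj.1 h2).symm)) k
        (LinearMap.range (φ.domRestrict W))
        (by rw [LinearMap.finrank_range_of_inj hinj]; exact hk)
        (by
          rintro f ⟨⟨f, hf⟩, rfl⟩ v hv
          change φ f v = 0
          by_cases h : v = x
          · rw [h]; exact hφx f
          · rw [hφn f v h]
            exact hW f hf v (fun h' => hv (Finset.mem_erase.2 ⟨h, h'⟩)))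
        (by
          rintro f ⟨⟨f, hf⟩, rfl⟩
          change φ f ⬝ᵥ (H' *ᵥ φ f) ≤ 0
          have h1 := hq f hf
          have h2 := form_expand H hH x (f x) (φ f)
          rw [← hφ] at h2
          rw [hform]
          have h3 : 0 ≤ H x x * (f x + (H x x)⁻¹ * (H x ⬝ᵥ φ f)) ^ 2 := by positivity
          have h4 : H x x * (f x + (H x x)⁻¹ * (H x ⬝ᵥ φ f)) ^ 2 =
            2 * f x * (H x ⬝ᵥ φ f) + H x x * f x ^ 2 + (H x x)⁻¹ * (H x ⬝ᵥ φ f) ^ 2 := by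
            field_simp
            ring
          linarith)
      have hgx : ∀ i, g i x = 0 := fun i => gS i x (by simp)
      have hgp : ∀ i, g i (p x) = 0 → H x ⬝ᵥ g i = 0 := by
        intro i h
        apply Finset.sum_eq_zero
        intro j _
        by_cases hj : j ∈ S.erase x
        · by_cases hc : H x j = 0
          · simp [hc]
          · rw [Finset.mem_erase] at hj
            rw [hleaf j hj.2 hj.1 hc, h, mul_zero]
        · rw [gS i j hj, mul_zero]
      refine ⟨fun i => g i + (-(H x x)⁻¹ * (H x ⬝ᵥ g i)) • Pi.single x 1, ?_, ?_, ?_, ?_⟩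
      · intro i h
        apply g0 i
        ext v
        by_cases hv : v = x
        · rw [hv]; exact hgx i
        · simpa [hv] using congrFun h v
      · intro i v hv
        have : v ≠ x := fun h => hv (h ▸ hxS)
        simpa [this] using gS i v (fun h => hv (Finset.mem_of_mem_erase h))
      · intro i j hij v
        by_cases hv : v = x
        · rcases gd i j hij (p x) with h | h
          · left; rw [hv]; simp [hgx, hgp i h]
          · right; rw [hv]; simp [hgx, hgp j h]
        · simpa [hv] using gd i j hij v
      · intro i
        have h1 := gq i
        rw [hform] at h1
        simp only []
        rw [form_expand H hH]
        have : 2 * (-(H x x)⁻¹ * (H x ⬝ᵥ g i)) * (H x ⬝ᵥ g i) + H x x * (-(H x x)⁻¹ * (H x ⬝ᵥ g i)) ^ 2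
          = - ((H x x)⁻¹ * (H x ⬝ᵥ g i) ^ 2) := by
          field_simp
          ring
        linarith


lemma spectral_subspace {n : ℕ} (B : Matrix (Fin n) (Fin n) ℝ) (hB : B.IsSymm)
    (μ : Fin n → ℝ) (hμ : ∀ i, 0 < μ i) (lam : Fin n → ℝ) (hmono : Monotone lam)
    (hchar : ((Matrix.diagonal μ)⁻¹ * B).charpoly = ∏ i, (X - C (lam i)))
    (k : Fin n) :
    ∃ W : Submodule ℝ (Fin n → ℝ), (k : ℕ) + 1 ≤ Module.finrank ℝ W ∧
      ∀ f ∈ W, f ⬝ᵥ ((B - lam k • Matrix.diagonal μ) *ᵥ f) ≤ 0 := by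
  classical
  set P : Matrix (Fin n) (Fin n) ℝ := Matrix.diagonal (fun i => (√(μ i))⁻¹) with hP
  have hPP : P * P = (Matrix.diagonal μ)⁻¹ := by
    symm
    apply Matrix.inv_eq_left_inv
    rw [hP, diagonal_mul_diagonal, diagonal_mul_diagonal, ← diagonal_one]
    congr 1
    ext i
    have h := Real.sq_sqrt (hμ i).le
    have h' := Real.sqrt_pos.2 (hμ i)
    field_simp
    exact h.symm
  have hPMP : P * Matrix.diagonal μ * P = 1 := by
    rw [hP, diagonal_mul_diagonal, diagonal_mul_diagonal, ← diagonal_one]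
    congr 1
    ext i
    have h := Real.sq_sqrt (hμ i).le
    have h' := Real.sqrt_pos.2 (hμ i)
    field_simp
    exact h.symm
  have hPT : Pᵀ = P := diagonal_transpose _
  set S : Matrix (Fin n) (Fin n) ℝ := P * B * P with hS
  have hSH : S.IsHermitian := by
    rw [Matrix.IsHermitian, conjTranspose_eq_transpose_of_trivial, hS, transpose_mul, transpose_mul,
      hPT, hB.eq, mul_assoc]
  have hchar2 : ∏ i, (X - C (lam i)) = ∏ i, (X - C (hSH.eigenvalues i)) := by
    rw [← hchar, ← hPP, mul_assoc, charpoly_mul_comm, ← hS, hSH.charpoly_eq]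
    rfl
  have hroots : Finset.univ.val.map lam = Finset.univ.val.map hSH.eigenvalues := by
    have h1 : ∀ a : Fin n → ℝ, (∏ i, (X - C (a i))).roots = Finset.univ.val.map a := by
      intro a
      rw [← Polynomial.roots_multiset_prod_X_sub_C (Finset.univ.val.map a), Multiset.map_map]
      rfl
    rw [← h1, ← h1, hchar2]
  have hcount : (k : ℕ) + 1 ≤ Fintype.card {i // hSH.eigenvalues i ≤ lam k} := by
    have h1 := congrArg (fun m => (m.filter (fun t => t ≤ lam k)).card) hroots
    simp only [Multiset.filter_map, Multiset.card_map] at h1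
    have h2 : (Finset.univ.filter (fun i => lam i ≤ lam k)).card =
        (Finset.univ.filter (fun i => hSH.eigenvalues i ≤ lam k)).card := h1
    rw [Fintype.card_subtype, ← h2, ← Fin.card_Iic]
    apply Finset.card_le_card
    intro i hi
    simp only [Finset.mem_filter, Finset.mem_univ, true_and]
    exact hmono (Finset.mem_Iic.1 hi)
  set U : Matrix (Fin n) (Fin n) ℝ := (hSH.eigenvectorUnitary : Matrix (Fin n) (Fin n) ℝ) with hU
  have hUU : Uᵀ * U = 1 := by
    have := Unitary.coe_star_mul_self hSH.eigenvectorUnitary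
    rwa [star_eq_conjTranspose, conjTranspose_eq_transpose_of_trivial] at this
  have hUSU : Uᵀ * S * U = diagonal hSH.eigenvalues := by
    have := hSH.conjStarAlgAut_star_eigenvectorUnitary
    rw [Unitary.conjStarAlgAut_star_apply, star_eq_conjTranspose,
      conjTranspose_eq_transpose_of_trivial] at this
    exact this
  let J := {i // hSH.eigenvalues i ≤ lam k}
  let N : Matrix (Fin n) J ℝ := (P * U).submatrix id Subtype.val
  have hgen : ∀ Y : Matrix (Fin n) (Fin n) ℝ,
      Nᵀ * Y * N = (Uᵀ * (P * Y * P) * U).submatrix Subtype.val Subtype.val := by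
    intro Y
    have : Uᵀ * (P * Y * P) * U = (P * U)ᵀ * Y * (P * U) := by
      rw [transpose_mul, hPT]; simp only [mul_assoc]
    rw [this]
    rfl
  have hNM : Nᵀ * Matrix.diagonal μ * N = 1 := by
    rw [hgen, hPMP, mul_one, hUU, submatrix_one _ Subtype.val_injective]
  have hNB : Nᵀ * (B - lam k • Matrix.diagonal μ) * N =
      diagonal (fun i : J => hSH.eigenvalues i - lam k) := by
    rw [Matrix.mul_sub, Matrix.sub_mul, Matrix.mul_smul, Matrix.smul_mul, hNM, hgen, ← hS, hUSU]
    ext i j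
    by_cases h : i = j
    · subst h; simp
    · simp [h, Subtype.val_injective.ne h]
  have hinj : Function.Injective N.mulVecLin := by
    rw [← LinearMap.ker_eq_bot, LinearMap.ker_eq_bot']
    intro c hc
    have hc' : N *ᵥ c = 0 := hc
    rw [← one_mulVec c, ← hNM, ← mulVec_mulVec, hc', mulVec_zero]
  refine ⟨LinearMap.range N.mulVecLin, ?_, ?_⟩
  · rw [LinearMap.finrank_range_of_inj hinj, Module.finrank_fintype_fun_eq_card]
    exact hcount
  · rintro f ⟨c, rfl⟩
    rw [mulVecLin_apply, dotProduct_comm, dotProduct_mulVec, ← mulVec_transpose, mulVec_mulVec,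
      mulVec_mulVec, hNB]
    apply Finset.sum_nonpos
    intro i _
    rw [mulVec_diagonal]
    nlinarith [sq_nonneg (c i), i.2]


noncomputable def theta (a t : ℝ) : ℝ := if t ≤ a then 1 else 0

lemma theta_int (a T : ℝ) : IntervalIntegrable (theta a) MeasureTheory.volume 0 T := by
  apply AntitoneOn.intervalIntegrable
  intro x _ y _ hxy
  unfold theta
  split_ifs <;> first | linarith | norm_num

lemma theta_integral (a T : ℝ) (h0 : 0 ≤ a) (hT : a ≤ T) : ∫ t in (0 : ℝ)..T, theta a t = a := by
  have h := intervalIntegral.integral_indicator (μ := MeasureTheory.volume)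
    (f := fun _ : ℝ => (1 : ℝ)) (a₁ := 0) (a₂ := a) (a₃ := T) ⟨h0, hT⟩
  simp only [intervalIntegral.integral_const, smul_eq_mul, mul_one, sub_zero] at h
  exact h

noncomputable def edgeK (s a b t : ℝ) : ℝ :=
  if 0 ≤ s * a * b then theta (max (a ^ 2) (b ^ 2)) t - theta (min (a ^ 2) (b ^ 2)) t
  else theta (a ^ 2) t + theta (b ^ 2) t

lemma edgeK_int (s a b T : ℝ) : IntervalIntegrable (edgeK s a b) MeasureTheory.volume 0 T := by
  by_cases h : 0 ≤ s * a * b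
  · have : edgeK s a b = fun t => theta (max (a ^ 2) (b ^ 2)) t - theta (min (a ^ 2) (b ^ 2)) t := by
      ext t; simp [edgeK, h]
    rw [this]
    exact (theta_int _ _).sub (theta_int _ _)
  · have : edgeK s a b = fun t => theta (a ^ 2) t + theta (b ^ 2) t := by
      ext t; simp [edgeK, h]
    rw [this]
    exact (theta_int _ _).add (theta_int _ _)

lemma edgeK_integral (s a b T : ℝ) (hs : s = 1 ∨ s = -1) (ha : a ^ 2 ≤ T) (hb : b ^ 2 ≤ T) :
    ∫ t in (0 : ℝ)..T, edgeK s a b t ≤ |a - s * b| * (|a| + |b|) := by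
  by_cases h : 0 ≤ s * a * b
  · have : edgeK s a b = fun t => theta (max (a ^ 2) (b ^ 2)) t - theta (min (a ^ 2) (b ^ 2)) t := by
      ext t; simp [edgeK, h]
    rw [this, intervalIntegral.integral_sub (theta_int _ _) (theta_int _ _),
      theta_integral _ _ (by positivity) (max_le ha hb),
      theta_integral _ _ (by positivity) ((min_le_left _ _).trans ha), max_sub_min_eq_abs']
    have h1 : a ^ 2 - b ^ 2 = (a - s * b) * (a + s * b) := by
      rcases hs with rfl | rfl <;> ring
    rw [h1, abs_mul]
    gcongr
    calc |a + s * b| ≤ |a| + |s * b| := abs_add_le _ _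
      _ = |a| + |b| := by rcases hs with rfl | rfl <;> simp
  · have : edgeK s a b = fun t => theta (a ^ 2) t + theta (b ^ 2) t := by
      ext t; simp [edgeK, h]
    rw [this, intervalIntegral.integral_add (theta_int _ _) (theta_int _ _),
      theta_integral _ _ (by positivity) ha, theta_integral _ _ (by positivity) hb]
    have h2 : |a - s * b| = |a| + |b| := by
      rw [← abs_of_nonneg (by positivity : 0 ≤ |a| + |b|), ← sq_eq_sq_iff_abs_eq_abs]
      have h3 : s * a * b = - (|a| * |b|) := by
        rw [← abs_mul]
        have h5 : |s * a * b| = |a * b| := by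
          rcases hs with rfl | rfl <;> simp [abs_mul]
        rw [← h5, abs_of_neg (not_le.1 h), neg_neg]
      have h4 : s ^ 2 = 1 := by rcases hs with rfl | rfl <;> norm_num
      have := sq_abs a
      have := sq_abs b
      linear_combination b ^ 2 * h4 - 2 * h3 - sq_abs a - sq_abs b
    rw [h2]
    nlinarith [mul_nonneg (abs_nonneg a) (abs_nonneg b), sq_abs a, sq_abs b]


noncomputable def indP (a t : ℝ) : ℝ := if 0 < a ∧ t ≤ a ^ 2 then 1 else 0
noncomputable def indN (a t : ℝ) : ℝ := if a < 0 ∧ t ≤ a ^ 2 then 1 else 0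

/-- Contribution of an ordered pair to the numerator of `signedBipartiteness`. -/
noncomputable def pairN (s a b t : ℝ) : ℝ :=
  2 * ((if s = 1 then 1 else 0) * (indP a t * indN b t)) +
    (if s = -1 then 1 else 0) * (indP a t * indP b t) +
    (if s = -1 then 1 else 0) * (indN a t * indN b t) +
    (indP a t + indN a t) * (1 - (indP b t + indN b t))

/-- Pointwise per-edge inequality. -/
lemma edge_pointwise (s a b t : ℝ) (hs : s = 1 ∨ s = -1) (ht : 0 < t) :
    pairN s a b t + pairN s b a t ≤ edgeK s a b t := by
  have h1 : ¬ ((1 : ℝ) = -1) := by norm_num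
  have h2 : ¬ ((-1 : ℝ) = 1) := by norm_num
  have h3 : ¬ (t ≤ 0) := not_le.2 ht
  have key : (0 ≤ s * a * b → s = 1 → 0 < a → ¬ b < 0) ∧ (0 ≤ s * a * b → s = 1 → 0 < b → ¬ a < 0) ∧
      (0 ≤ s * a * b → s = -1 → 0 < a → ¬ 0 < b) ∧ (0 ≤ s * a * b → s = -1 → a < 0 → ¬ b < 0) := by
    refine ⟨?_, ?_, ?_, ?_⟩ <;> rintro h rfl h5 h6 <;> nlinarith
  have key2 : ¬ (0 ≤ s * a * b) → a ≠ 0 ∧ b ≠ 0 := by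
    intro h
    constructor <;> rintro rfl <;> simp at h
  have key3 : ¬ (0 ≤ s * a * b) → (s = 1 → ((0 < a → b < 0) ∧ (a < 0 → 0 < b))) ∧
      (s = -1 → ((0 < a → 0 < b) ∧ (a < 0 → b < 0))) := by
    intro h
    rw [not_le] at h
    refine ⟨fun e => ⟨fun h5 => ?_, fun h5 => ?_⟩, fun e => ⟨fun h5 => ?_, fun h5 => ?_⟩⟩ <;>
      subst e <;> by_contra h6 <;> nlinarith [not_lt.1 h6]
  unfold pairN edgeK theta indP indN
  simp only [le_max_iff, le_min_iff]
  by_cases hc : 0 ≤ s * a * b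
  · simp only [hc, if_true]
    obtain ⟨k1, k2, k3, k4⟩ := key
    specialize k1 hc
    specialize k2 hc
    specialize k3 hc
    specialize k4 hc
    clear key2 key3 hc
    rcases hs with rfl | rfl <;> rcases lt_trichotomy a 0 with ha | ha | ha <;>
      rcases lt_trichotomy b 0 with hb | hb | hb <;>
      by_cases h5 : t ≤ a ^ 2 <;> by_cases h6 : t ≤ b ^ 2 <;>
      first
      | (exfalso; first | exact k1 rfl ha hb | exact k2 rfl hb ha | exact k3 rfl ha hb | exact k4 rfl ha hb)
      | (simp [ha, hb, h5, h6, h1, h2, h3, not_lt.2 ha.le, not_lt.2 hb.le]; done)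
  · simp only [hc, if_false]
    obtain ⟨ha0, hb0⟩ := key2 hc
    obtain ⟨k1, k2⟩ := key3 hc
    clear key key2 key3 hc
    rcases hs with rfl | rfl <;> rcases lt_or_gt_of_ne ha0 with ha | ha <;>
      rcases lt_or_gt_of_ne hb0 with hb | hb <;>
      by_cases h5 : t ≤ a ^ 2 <;> by_cases h6 : t ≤ b ^ 2 <;>
      first
      | (exfalso; first
          | exact lt_asymm ((k1 rfl).1 ha) hb | exact lt_asymm ((k1 rfl).2 ha) hb
          | exact lt_asymm ((k2 rfl).1 ha) hb | exact lt_asymm ((k2 rfl).2 ha) hb)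
      | (simp [ha, hb, h5, h6, h1, h2, not_lt.2 ha.le, not_lt.2 hb.le]; done)
      | (simp [ha, hb, h5, h6, h1, h2, not_lt.2 ha.le, not_lt.2 hb.le]; norm_num; done)


lemma ii_sum {ι : Type*} (S : Finset ι) (F : ι → ℝ → ℝ) (T : ℝ)
    (h : ∀ i ∈ S, IntervalIntegrable (F i) MeasureTheory.volume 0 T) :
    IntervalIntegrable (fun t => ∑ i ∈ S, F i t) MeasureTheory.volume 0 T := by
  have := IntervalIntegrable.sum S h
  have e : (fun t => ∑ i ∈ S, F i t) = ∑ i ∈ S, F i := by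
    ext t
    simp
  rw [e]
  exact this

lemma sum_ind {V : Type*} [Fintype V] [DecidableEq V] (A B : Finset V) (F : V → V → ℝ) :
    ∑ x ∈ A, ∑ y ∈ B, F x y =
      ∑ x, ∑ y, ((if x ∈ A then 1 else 0) * (if y ∈ B then 1 else 0)) * F x y := by
  rw [← Finset.sum_filter_add_sum_filter_not Finset.univ (· ∈ A)]
  have : ∑ x ∈ Finset.univ.filter (fun x => ¬ x ∈ A), ∑ y,
      (((if x ∈ A then 1 else 0) * (if y ∈ B then 1 else 0)) * F x y) = 0 := by
    apply Finset.sum_eq_zero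
    intro x hx
    simp only [Finset.mem_filter] at hx
    simp [hx.2]
  rw [this, add_zero, Finset.filter_mem_eq_inter, Finset.univ_inter]
  apply Finset.sum_congr rfl
  intro x hx
  simp [hx]

lemma numerator_eq {V : Type*} [Fintype V] [DecidableEq V] (w s : V → V → ℝ) (g : V → ℝ) (t : ℝ)
    (V₁ V₂ : Finset V) (h1 : ∀ x, x ∈ V₁ ↔ 0 < g x ∧ t ≤ g x ^ 2)
    (h2 : ∀ x, x ∈ V₂ ↔ g x < 0 ∧ t ≤ g x ^ 2) :
    2 * posEdgeWeight w s V₁ V₂ + negEdgeWeight w s V₁ V₁ + negEdgeWeight w s V₂ V₂ +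
      boundaryWeight w (V₁ ∪ V₂) = ∑ x, ∑ y, w x y * pairN (s x y) (g x) (g y) t := by
  have e1 : ∀ x, (if x ∈ V₁ then (1 : ℝ) else 0) = indP (g x) t := by
    intro x; simp only [h1, indP]
  have e2 : ∀ x, (if x ∈ V₂ then (1 : ℝ) else 0) = indN (g x) t := by
    intro x; simp only [h2, indN]
  have e3 : ∀ x, (if x ∈ V₁ ∪ V₂ then (1 : ℝ) else 0) = indP (g x) t + indN (g x) t := by
    intro x
    rw [← e1, ← e2]
    by_cases ha : x ∈ V₁ <;> by_cases hb : x ∈ V₂ <;> simp [ha, hb]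
    linarith [((h1 x).1 ha).1, ((h2 x).1 hb).1]
  have e4 : ∀ x, (if x ∈ (V₁ ∪ V₂)ᶜ then (1 : ℝ) else 0) = 1 - (indP (g x) t + indN (g x) t) := by
    intro x
    rw [← e3]
    by_cases ha : x ∈ V₁ ∪ V₂
    · simp only [Finset.mem_compl, ha]; simp
    · simp only [Finset.mem_compl, ha]; simp
  unfold posEdgeWeight negEdgeWeight boundaryWeight
  rw [sum_ind V₁ V₂, sum_ind V₁ V₁, sum_ind V₂ V₂, sum_ind (V₁ ∪ V₂)]
  simp only [e1, e2, e3, e4]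
  rw [Finset.mul_sum]
  simp only [Finset.mul_sum, ← Finset.sum_add_distrib]
  apply Finset.sum_congr rfl; intro x _
  apply Finset.sum_congr rfl; intro y _
  unfold pairN
  split_ifs <;> ring

lemma sweep {V : Type*} [Fintype V] [DecidableEq V]
    (w : V → V → ℝ) (hsymm : ∀ i j, w i j = w j i) (hw : ∀ i j, 0 ≤ w i j)
    (s : V → V → ℝ) (hssymm : ∀ i j, s i j = s j i)
    (hsval : ∀ i j, w i j ≠ 0 → s i j = 1 ∨ s i j = -1)
    (μ : V → ℝ) (hμ : ∀ i, 0 < μ i) (lam τ : ℝ) (hτ : ∀ i, wdeg w i ≤ τ * μ i)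
    (g : V → ℝ) (hg : g ≠ 0)
    (hR : (1 / 2 : ℝ) * ∑ i, ∑ j, w i j * (g i - s i j * g j) ^ 2 ≤ lam * ∑ i, μ i * g i ^ 2)
    (c : ℝ) (hc : √(2 * τ * lam) < c) :
    ∃ V₁ V₂ : Finset V, Disjoint V₁ V₂ ∧ (V₁ ∪ V₂).Nonempty ∧
      (∀ x ∈ V₁ ∪ V₂, g x ≠ 0) ∧ signedBipartiteness w s μ V₁ V₂ ≤ c := by
  classical
  by_contra hcon
  set T : ℝ := ∑ i, g i ^ 2 with hT
  have hgT : ∀ i, g i ^ 2 ≤ T := fun i =>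
    Finset.single_le_sum (f := fun i => g i ^ 2) (fun i _ => sq_nonneg _) (Finset.mem_univ i)
  have hT0 : 0 ≤ T := Finset.sum_nonneg fun i _ => sq_nonneg _
  set m : ℝ := ∑ i, μ i * g i ^ 2 with hm
  have hm0 : 0 < m := by
    obtain ⟨x, hx⟩ := Function.ne_iff.1 hg
    have hx : g x ≠ 0 := hx
    apply Finset.sum_pos' (fun i _ => mul_nonneg (hμ i).le (sq_nonneg _))
    exact ⟨x, Finset.mem_univ _, mul_pos (hμ x) (by positivity)⟩
  -- pointwise bound
  have hpt : ∀ t, 0 < t → c * ∑ i, μ i * theta (g i ^ 2) t ≤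
      ∑ i, ∑ j, (1 / 2 * w i j) * edgeK (s i j) (g i) (g j) t := by
    intro t ht
    set V₁ := Finset.univ.filter (fun x => 0 < g x ∧ t ≤ g x ^ 2) with hV1
    set V₂ := Finset.univ.filter (fun x => g x < 0 ∧ t ≤ g x ^ 2) with hV2
    have h1 : ∀ x, x ∈ V₁ ↔ 0 < g x ∧ t ≤ g x ^ 2 := by simp [hV1]
    have h2 : ∀ x, x ∈ V₂ ↔ g x < 0 ∧ t ≤ g x ^ 2 := by simp [hV2]
    have hU : ∀ x, x ∈ V₁ ∪ V₂ ↔ t ≤ g x ^ 2 := by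
      intro x
      rw [Finset.mem_union, h1, h2]
      constructor
      · rintro (h | h) <;> exact h.2
      · intro h
        rcases lt_trichotomy (g x) 0 with h' | h' | h'
        · exact Or.inr ⟨h', h⟩
        · rw [h'] at h; norm_num at h; linarith
        · exact Or.inl ⟨h', h⟩
    have hdis : Disjoint V₁ V₂ := by
      rw [Finset.disjoint_left]
      intro x ha hb
      linarith [((h1 x).1 ha).1, ((h2 x).1 hb).1]
    have hvol : ∑ i, μ i * theta (g i ^ 2) t = ∑ x ∈ V₁ ∪ V₂, μ x := by
      rw [← Finset.univ_inter (V₁ ∪ V₂), ← Finset.filter_mem_eq_inter, Finset.sum_filter]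
      apply Finset.sum_congr rfl
      intro x _
      simp only [hU, theta]
      split_ifs <;> simp
    have hnum : 2 * posEdgeWeight w s V₁ V₂ + negEdgeWeight w s V₁ V₁ + negEdgeWeight w s V₂ V₂ +
      boundaryWeight w (V₁ ∪ V₂) ≤ ∑ i, ∑ j, (1 / 2 * w i j) * edgeK (s i j) (g i) (g j) t := by
      rw [numerator_eq w s g t V₁ V₂ h1 h2]
      have hsw : ∑ x, ∑ y, w x y * pairN (s x y) (g x) (g y) t =
          ∑ x, ∑ y, w x y * pairN (s x y) (g y) (g x) t := by
        rw [Finset.sum_comm]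
        apply Finset.sum_congr rfl; intro x _
        apply Finset.sum_congr rfl; intro y _
        rw [hsymm, hssymm]
      have : ∑ x, ∑ y, w x y * pairN (s x y) (g x) (g y) t =
          ∑ x, ∑ y, (1 / 2 * w x y) * (pairN (s x y) (g x) (g y) t + pairN (s x y) (g y) (g x) t) := by
        have : ∀ x y, (1 / 2 * w x y) * (pairN (s x y) (g x) (g y) t + pairN (s x y) (g y) (g x) t) =
          1 / 2 * (w x y * pairN (s x y) (g x) (g y) t) + 1 / 2 * (w x y * pairN (s x y) (g y) (g x) t) :=
          fun x y => by ring
        simp only [this, Finset.sum_add_distrib, ← Finset.mul_sum]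
        linarith
      rw [this]
      apply Finset.sum_le_sum; intro x _
      apply Finset.sum_le_sum; intro y _
      by_cases h0 : w x y = 0
      · simp [h0]
      · exact mul_le_mul_of_nonneg_left (edge_pointwise _ _ _ _ (hsval x y h0) ht)
          (by have := hw x y; positivity)
    rw [hvol]
    refine le_trans ?_ hnum
    by_cases hne : (V₁ ∪ V₂).Nonempty
    · have hvp : 0 < ∑ x ∈ V₁ ∪ V₂, μ x := Finset.sum_pos (fun i _ => hμ i) hne
      have h3 : c < signedBipartiteness w s μ V₁ V₂ := by
        by_contra h
        refine hcon ⟨V₁, V₂, hdis, hne, ?_, not_lt.1 h⟩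
        intro x hx h0
        rw [hU, h0] at hx
        norm_num at hx
        linarith
      unfold signedBipartiteness at h3
      rw [lt_div_iff₀ hvp] at h3
      exact h3.le
    · rw [Finset.not_nonempty_iff_eq_empty] at hne
      rw [hne, Finset.sum_empty, mul_zero]
      unfold posEdgeWeight negEdgeWeight boundaryWeight
      have hnn : ∀ (A B : Finset V) (p : V → V → Prop) [∀ x y, Decidable (p x y)],
          0 ≤ ∑ x ∈ A, ∑ y ∈ B, if p x y then w x y else 0 := by
        intro A B p _
        apply Finset.sum_nonneg; intro x _
        apply Finset.sum_nonneg; intro y _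
        split_ifs
        · exact hw x y
        · exact le_rfl
      have := hnn V₁ V₂ (fun x y => s x y = 1)
      have := hnn V₁ V₁ (fun x y => s x y = -1)
      have := hnn V₂ V₂ (fun x y => s x y = -1)
      simp only [Finset.sum_empty]
      linarith
  -- integrate
  have hIneq := intervalIntegral.integral_mono_on_of_le_Ioo (μ := MeasureTheory.volume)
    (a := 0) (b := T) (f := fun t => c * ∑ i, μ i * theta (g i ^ 2) t)
    (g := fun t => ∑ i, ∑ j, (1 / 2 * w i j) * edgeK (s i j) (g i) (g j) t) hT0
    (by
      apply IntervalIntegrable.const_mul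
      apply ii_sum
      intro i _
      exact (theta_int _ _).const_mul _)
    (by
      apply ii_sum
      intro i _
      apply ii_sum
      intro j _
      exact (edgeK_int _ _ _ _).const_mul _)
    (fun t ht => hpt t ht.1)
  rw [intervalIntegral.integral_const_mul, intervalIntegral.integral_finsetSum
    (fun i _ => (theta_int _ _).const_mul _), intervalIntegral.integral_finsetSum
    (fun i _ => by
      apply ii_sum
      intro j _
      exact (edgeK_int _ _ _ _).const_mul _)] at hIneq
  have hl : ∑ i, ∫ t in (0 : ℝ)..T, μ i * theta (g i ^ 2) t = m := by
    apply Finset.sum_congr rfl; intro i _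
    rw [intervalIntegral.integral_const_mul, theta_integral _ _ (sq_nonneg _) (hgT i)]
  have hr : ∑ i, ∫ t in (0 : ℝ)..T, ∑ j, (1 / 2 * w i j) * edgeK (s i j) (g i) (g j) t ≤
      ∑ i, ∑ j, (1 / 2 * w i j) * (|g i - s i j * g j| * (|g i| + |g j|)) := by
    apply Finset.sum_le_sum; intro i _
    rw [intervalIntegral.integral_finsetSum (fun j _ => (edgeK_int _ _ _ _).const_mul _)]
    apply Finset.sum_le_sum; intro j _
    rw [intervalIntegral.integral_const_mul]
    by_cases h0 : w i j = 0
    · simp [h0]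
    · exact mul_le_mul_of_nonneg_left (edgeK_integral _ _ _ _ (hsval i j h0) (hgT i) (hgT j))
        (by have := hw i j; positivity)
  rw [hl] at hIneq
  set Xs := ∑ i, ∑ j, (1 / 2 * w i j) * (|g i - s i j * g j| * (|g i| + |g j|)) with hXs
  have hCS : Xs ^ 2 ≤ ((1 / 2 : ℝ) * ∑ i, ∑ j, w i j * (g i - s i j * g j) ^ 2) *
      ((1 / 2 : ℝ) * ∑ i, ∑ j, w i j * (|g i| + |g j|) ^ 2) := by
    have e1 : (1 / 2 : ℝ) * ∑ i, ∑ j, w i j * (g i - s i j * g j) ^ 2 =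
        ∑ x : V × V, 1 / 2 * (w x.1 x.2 * (g x.1 - s x.1 x.2 * g x.2) ^ 2) := by
      rw [Fintype.sum_prod_type]
      simp only [Finset.mul_sum]
    have e2 : (1 / 2 : ℝ) * ∑ i, ∑ j, w i j * (|g i| + |g j|) ^ 2 =
        ∑ x : V × V, 1 / 2 * (w x.1 x.2 * (|g x.1| + |g x.2|) ^ 2) := by
      rw [Fintype.sum_prod_type]
      simp only [Finset.mul_sum]
    have e3 : Xs = ∑ x : V × V, (1 / 2 * w x.1 x.2) *
        (|g x.1 - s x.1 x.2 * g x.2| * (|g x.1| + |g x.2|)) := by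
      rw [Fintype.sum_prod_type]
    rw [e1, e2, e3]
    apply Finset.sum_sq_le_sum_mul_sum_of_sq_le_mul
    · intro i _
      have := hw i.1 i.2
      positivity
    · intro i _
      have := hw i.1 i.2
      positivity
    · intro i _
      rw [mul_pow, mul_pow |g i.1 - s i.1 i.2 * g i.2|, sq_abs]
      apply le_of_eq
      ring
  have h2 : (1 / 2 : ℝ) * ∑ i, ∑ j, w i j * (|g i| + |g j|) ^ 2 ≤ 2 * τ * m := by
    have h3 : ∑ i, ∑ j, w i j * (|g i| + |g j|) ^ 2 ≤
        ∑ i, ∑ j, (2 * (w i j * g i ^ 2) + 2 * (w i j * g j ^ 2)) := by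
      apply Finset.sum_le_sum; intro i _
      apply Finset.sum_le_sum; intro j _
      have h4 : (|g i| + |g j|) ^ 2 ≤ 2 * g i ^ 2 + 2 * g j ^ 2 := by
        nlinarith [sq_nonneg (|g i| - |g j|), sq_abs (g i), sq_abs (g j)]
      have := mul_le_mul_of_nonneg_left h4 (hw i j)
      linarith
    have h5 : ∑ i, ∑ j, w i j * g j ^ 2 = ∑ i, ∑ j, w i j * g i ^ 2 := by
      rw [Finset.sum_comm]
      apply Finset.sum_congr rfl; intro x _
      apply Finset.sum_congr rfl; intro y _
      rw [hsymm]
    have h6 : ∑ i, ∑ j, w i j * g i ^ 2 ≤ τ * m := by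
      rw [hm, Finset.mul_sum]
      apply Finset.sum_le_sum; intro i _
      rw [← Finset.sum_mul]
      have := mul_le_mul_of_nonneg_right (hτ i) (sq_nonneg (g i))
      unfold wdeg at this
      linarith
    simp only [Finset.sum_add_distrib, ← Finset.mul_sum] at h3
    rw [h5] at h3
    linarith
  have hQ0 : 0 ≤ (1 / 2 : ℝ) * ∑ i, ∑ j, w i j * (g i - s i j * g j) ^ 2 := by
    apply mul_nonneg (by norm_num)
    exact Finset.sum_nonneg fun i _ => Finset.sum_nonneg fun j _ => mul_nonneg (hw i j) (sq_nonneg _)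
  have hP0 : 0 ≤ (1 / 2 : ℝ) * ∑ i, ∑ j, w i j * (|g i| + |g j|) ^ 2 := by
    apply mul_nonneg (by norm_num)
    exact Finset.sum_nonneg fun i _ => Finset.sum_nonneg fun j _ => mul_nonneg (hw i j) (sq_nonneg _)
  have h7 : Xs ^ 2 ≤ (2 * τ * lam) * m ^ 2 := by
    calc Xs ^ 2 ≤ _ := hCS
      _ ≤ (lam * m) * (2 * τ * m) := mul_le_mul hR h2 hP0 (hQ0.trans hR)
      _ = _ := by ring
  have h8 : Xs ≤ √(2 * τ * lam) * m := by
    calc Xs ≤ √(Xs ^ 2) := Real.le_sqrt_of_sq_le le_rfl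
      _ ≤ √((2 * τ * lam) * m ^ 2) := Real.sqrt_le_sqrt h7
      _ = √(2 * τ * lam) * m := by rw [Real.sqrt_mul' _ (sq_nonneg m), Real.sqrt_sq hm0.le]
  have h9 := mul_lt_mul_of_pos_right hc hm0
  linarith

lemma lap_form {V : Type*} [Fintype V] [DecidableEq V] (w s : V → V → ℝ)
    (hsymm : ∀ i j, w i j = w j i) (hsval : ∀ i j, w i j ≠ 0 → s i j = 1 ∨ s i j = -1)
    (f : V → ℝ) :
    f ⬝ᵥ ((Matrix.diagonal (wdeg w) - Matrix.of (fun i j => s i j * w i j)) *ᵥ f) =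
      1 / 2 * ∑ i, ∑ j, w i j * (f i - s i j * f j) ^ 2 := by
  have h1 : ∀ i j, w i j * (f i - s i j * f j) ^ 2 =
      w i j * f i ^ 2 + w i j * f j ^ 2 - 2 * (f i * (s i j * w i j * f j)) := by
    intro i j
    by_cases h0 : w i j = 0
    · simp [h0]
    · rcases hsval i j h0 with h | h <;> rw [h] <;> ring
  have h5 : ∑ i, ∑ j, w i j * f j ^ 2 = ∑ i, ∑ j, w i j * f i ^ 2 := by
    rw [Finset.sum_comm]
    apply Finset.sum_congr rfl; intro x _
    apply Finset.sum_congr rfl; intro y _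
    rw [hsymm]
  simp only [h1, Finset.sum_add_distrib, Finset.sum_sub_distrib, ← Finset.mul_sum]
  rw [h5, sub_mulVec, dotProduct_sub]
  have h6 : f ⬝ᵥ (Matrix.diagonal (wdeg w) *ᵥ f) = ∑ i, ∑ j, w i j * f i ^ 2 := by
    simp only [dotProduct, mulVec_diagonal, wdeg, ← Finset.sum_mul]
    apply Finset.sum_congr rfl; intro x _
    ring
  have h7 : f ⬝ᵥ ((Matrix.of (fun i j => s i j * w i j)) *ᵥ f) =
      ∑ i, f i * ∑ j, s i j * w i j * f j := rfl
  rw [h6, h7]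
  ring

lemma disjoint_functions {n : ℕ} (G : SimpleGraph (Fin n))
    [DecidableRel G.Adj] (hconn : G.Connected)
    (w : Fin n → Fin n → ℝ) (hsymm : ∀ i j, w i j = w j i)
    (hpos : ∀ i j, G.Adj i j → 0 < w i j) (hzero : ∀ i j, ¬ G.Adj i j → w i j = 0)
    (sg : Fin n → Fin n → ℝ) (hssymm : ∀ i j, sg i j = sg j i)
    (hsval : ∀ i j, G.Adj i j → sg i j = 1 ∨ sg i j = -1)
    (H : Matrix (Fin n) (Fin n) ℝ) (hH : H.IsSymm)
    (hoff : ∀ i j, i ≠ j → H i j = - (sg i j * w i j))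
    (k : ℕ) (W : Submodule ℝ (Fin n → ℝ))
    (hk : k + (G.edgeFinset.card + 1 - n) ≤ Module.finrank ℝ W)
    (hW : ∀ f ∈ W, f ⬝ᵥ (H *ᵥ f) ≤ 0) :
    ∃ g : Fin k → Fin n → ℝ, (∀ i, g i ≠ 0) ∧
      (∀ i j, i ≠ j → ∀ v, g i v = 0 ∨ g j v = 0) ∧ ∀ i, g i ⬝ᵥ (H *ᵥ g i) ≤ 0 := by
  classical
  obtain ⟨r⟩ := hconn.nonempty
  have hpar : ∀ v, ∃ u, v ≠ r → G.Adj v u ∧ G.dist u r < G.dist v r := by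
    intro v
    obtain ⟨q, hq⟩ := hconn.exists_walk_length_eq_dist v r
    cases q with
    | nil => exact ⟨r, fun h => absurd rfl h⟩
    | @cons _ u _ h q =>
      refine ⟨u, fun _ => ⟨h, ?_⟩⟩
      have := SimpleGraph.dist_le q
      rw [SimpleGraph.Walk.length_cons] at hq
      omega
  choose p hp using hpar
  set TE : Finset (Sym2 (Fin n)) := (Finset.univ.erase r).image (fun v => s(v, p v)) with hTE
  have hTEsub : TE ⊆ G.edgeFinset := by
    intro e he
    obtain ⟨v, hv, rfl⟩ := Finset.mem_image.1 he
    rw [SimpleGraph.mem_edgeFinset, SimpleGraph.mem_edgeSet]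
    exact (hp v (Finset.ne_of_mem_erase hv)).1
  have hTEcard : TE.card = n - 1 := by
    rw [hTE, Finset.card_image_of_injOn, Finset.card_erase_of_mem (Finset.mem_univ r),
      Finset.card_univ, Fintype.card_fin]
    intro u hu v hv huv
    have hu' := (hp u (Finset.ne_of_mem_erase hu)).2
    have hv' := (hp v (Finset.ne_of_mem_erase hv)).2
    rcases Sym2.eq_iff.1 huv with h | h
    · exact h.1
    · exfalso
      rw [h.2] at hu'
      rw [← h.1] at hv'
      omega
  set F := G.edgeFinset \ TE with hF
  have hFcard : F.card = G.edgeFinset.card + 1 - n := by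
    rw [hF, Finset.card_sdiff_of_subset hTEsub, hTEcard]
    have : 0 < n := r.pos
    omega
  set w' : Fin n → Fin n → ℝ := fun i j => if s(i, j) ∈ TE then 0 else w i j with hw'
  have hw'symm : ∀ i j, w' i j = w' j i := by
    intro i j
    simp only [hw', Sym2.eq_swap (a := i) (b := j), hsymm i j]
  have hw0 : ∀ i j, 0 ≤ w i j := by
    intro i j
    by_cases h : G.Adj i j
    · exact (hpos i j h).le
    · exact (hzero i j h).ge
  have hw'0 : ∀ i j, 0 ≤ w' i j := by
    intro i j
    simp only [hw']
    split_ifs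
    · exact le_rfl
    · exact hw0 i j
  have hw'F : ∀ i j, w' i j ≠ 0 → G.Adj i j ∧ s(i, j) ∈ F := by
    intro i j h
    simp only [hw'] at h
    split_ifs at h with h1
    · exact absurd rfl h
    · have h2 : G.Adj i j := by
        by_contra h3
        exact h (hzero i j h3)
      refine ⟨h2, ?_⟩
      rw [hF, Finset.mem_sdiff, SimpleGraph.mem_edgeFinset, SimpleGraph.mem_edgeSet]
      exact ⟨h2, h1⟩
  set C' : Matrix (Fin n) (Fin n) ℝ :=
    Matrix.diagonal (wdeg w') - Matrix.of (fun i j => (- sg i j) * w' i j) with hC'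
  have hCform : ∀ f : Fin n → ℝ, f ⬝ᵥ (C' *ᵥ f) =
      1 / 2 * ∑ i, ∑ j, w' i j * (f i - (- sg i j) * f j) ^ 2 := by
    intro f
    apply lap_form w' (fun i j => - sg i j) hw'symm
    intro i j h
    rcases hsval i j (hw'F i j h).1 with h | h <;> simp [h]
  have hCsymm : C'.IsSymm := by
    rw [Matrix.IsSymm, hC', transpose_sub, diagonal_transpose]
    congr 1
    ext i j
    simp only [transpose_apply, of_apply]
    rw [hssymm, hw'symm]
  let φ : (Fin n → ℝ) →ₗ[ℝ] (F → ℝ) := LinearMap.pi fun e =>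
    LinearMap.proj (Quot.out e.1).1 +
      sg (Quot.out e.1).1 (Quot.out e.1).2 • LinearMap.proj (Quot.out e.1).2
  obtain ⟨W', hW'W, hW'φ, hW'r⟩ := sub_ker W φ
  rw [Module.finrank_fintype_fun_eq_card, Fintype.card_coe, hFcard] at hW'r
  obtain ⟨g, g0, -, gd, gq⟩ := forest_lemma (fun v => G.dist v r) p n Finset.univ (by simp)
    (H + C') (hH.add hCsymm)
    (by
      intro i _ j _ hij hne
      by_cases hT : s(i, j) ∈ TE
      · obtain ⟨v, hv, he⟩ := Finset.mem_image.1 hT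
        have hv' := (hp v (Finset.ne_of_mem_erase hv)).2
        rcases Sym2.eq_iff.1 he with h | h
        · left
          rw [← h.1, ← h.2]
          exact ⟨rfl, hv'⟩
        · right
          rw [← h.1, ← h.2]
          exact ⟨rfl, hv'⟩
      · exfalso
        apply hne
        rw [Matrix.add_apply, hoff i j hij, hC', Matrix.sub_apply, diagonal_apply_ne _ hij, of_apply]
        simp only [hw', hT, if_false]
        ring) k W' (by omega) (fun f _ v hv => absurd (Finset.mem_univ v) hv)
    (by
      intro f hf
      rw [add_mulVec, dotProduct_add, hCform]
      have : ∑ i, ∑ j, w' i j * (f i - (- sg i j) * f j) ^ 2 = 0 := by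
        apply Finset.sum_eq_zero; intro i _
        apply Finset.sum_eq_zero; intro j _
        by_cases h0 : w' i j = 0
        · simp [h0]
        · obtain ⟨hadj, hmem⟩ := hw'F i j h0
          have h1 := congrFun (hW'φ f hf) ⟨s(i, j), hmem⟩
          have h2 : f (Quot.out s(i, j)).1 + sg (Quot.out s(i, j)).1 (Quot.out s(i, j)).2 *
            f (Quot.out s(i, j)).2 = 0 := h1
          have h3 : s((Quot.out s(i, j)).1, (Quot.out s(i, j)).2) = s(i, j) := Quot.out_eq _
          have h4 : f i + sg i j * f j = 0 := by
            rcases Sym2.eq_iff.1 h3 with h | h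
            · rwa [h.1, h.2] at h2
            · rw [h.1, h.2, hssymm] at h2
              rcases hsval i j hadj with h5 | h5 <;> rw [h5] at h2 ⊢ <;> linarith
          have h6 : f i - (- sg i j) * f j = 0 := by linarith
          rw [h6]; simp
      rw [this]
      linarith [hW f (hW'W hf)])
  refine ⟨g, g0, gd, fun i => ?_⟩
  have h1 := gq i
  rw [add_mulVec, dotProduct_add, hCform] at h1
  have : 0 ≤ ∑ a, ∑ b, w' a b * (g i a - (- sg a b) * g i b) ^ 2 :=
    Finset.sum_nonneg fun a _ => Finset.sum_nonneg fun b _ => mul_nonneg (hw'0 a b) (sq_nonneg _)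
  linarith

/-- **Higher-order signed Cheeger inequalities via the cyclomatic number.** For a finite
connected signed graph with nonnegative potential, with cyclomatic number `ℓ = |E| - |V| + 1`,
for every `ℓ + 1 ≤ k ≤ n` one has `ρ^σ_{k-ℓ}(Γ) ≤ √(2 τ_Γ λ^σ_k)`, where
`λ^σ_1 ≤ … ≤ λ^σ_n` are the eigenvalues of the normalized signed Laplacian listed with
multiplicity in ascending order. -/
theorem signed_multiway_cheeger_cyclomatic (n : ℕ) (G : SimpleGraph (Fin n))
    [DecidableRel G.Adj] (hconn : G.Connected)
    (w : Fin n → Fin n → ℝ) (hsymm : ∀ i j, w i j = w j i)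
    (hpos : ∀ i j, G.Adj i j → 0 < w i j) (hzero : ∀ i j, ¬ G.Adj i j → w i j = 0)
    (s : Fin n → Fin n → ℝ) (hssymm : ∀ i j, s i j = s j i)
    (hsval : ∀ i j, G.Adj i j → s i j = 1 ∨ s i j = -1)
    (μ : Fin n → ℝ) (hμ : ∀ i, 0 < μ i)
    (κ : Fin n → ℝ) (hκ : ∀ i, 0 ≤ κ i)
    (lam : Fin n → ℝ) (hmono : Monotone lam)
    (hchar : (signedNormLap w s μ κ).charpoly = ∏ i, (X - C (lam i)))
    (l : ℕ) (hl : l = G.edgeFinset.card + 1 - n)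
    (k : ℕ) (hk1 : l + 1 ≤ k) (hk2 : k ≤ n) :
    signedCheeger (k - l) w s μ ≤
      Real.sqrt (2 * (⨆ i, wdeg w i / μ i) * lam ⟨k - 1, by omega⟩) := by
  have hn : 0 < n := by omega
  have hw0 : ∀ i j, 0 ≤ w i j := by
    intro i j
    by_cases h : G.Adj i j
    · exact (hpos i j h).le
    · exact (hzero i j h).ge
  have hadj : ∀ i j, w i j ≠ 0 → G.Adj i j := by
    intro i j h
    by_contra h'
    exact h (hzero i j h')
  set Λ := lam ⟨k - 1, by omega⟩ with hΛ
  set B : Matrix (Fin n) (Fin n) ℝ :=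
    Matrix.diagonal (wdeg w) - Matrix.of (fun i j => s i j * w i j) + Matrix.diagonal κ with hB
  have hBsymm : B.IsSymm := by
    rw [Matrix.IsSymm, hB, transpose_add, transpose_sub, diagonal_transpose, diagonal_transpose]
    congr 2
    ext i j
    simp only [transpose_apply, of_apply]
    rw [hssymm, hsymm]
  obtain ⟨W, hWr, hWq⟩ := spectral_subspace B hBsymm μ hμ lam hmono hchar ⟨k - 1, by omega⟩
  rw [← hΛ] at hWq
  have hHsymm : (B - Λ • Matrix.diagonal μ).IsSymm := by
    rw [Matrix.IsSymm, transpose_sub, hBsymm.eq, transpose_smul, diagonal_transpose]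
  obtain ⟨g, g0, gd, gq⟩ := disjoint_functions G hconn w hsymm hpos hzero s hssymm hsval
    (B - Λ • Matrix.diagonal μ) hHsymm
    (by
      intro i j hij
      simp [hB, hij]) (k - l) W (by simp only at hWr; omega) hWq
  apply le_of_forall_gt_imp_ge_of_dense
  intro c hc
  have hsw : ∀ i, ∃ V₁ V₂ : Finset (Fin n), Disjoint V₁ V₂ ∧ (V₁ ∪ V₂).Nonempty ∧
      (∀ x ∈ V₁ ∪ V₂, g i x ≠ 0) ∧ signedBipartiteness w s μ V₁ V₂ ≤ c := by
    intro i
    refine sweep w hsymm hw0 s hssymm (fun i j h => hsval i j (hadj i j h)) μ hμ Λ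
      (⨆ i, wdeg w i / μ i) ?_ (g i) (g0 i) ?_ c hc
    · intro j
      rw [← div_le_iff₀ (hμ j)]
      exact le_ciSup (f := fun i => wdeg w i / μ i) (Set.finite_range _).bddAbove j
    · have h1 := gq i
      rw [sub_mulVec, dotProduct_sub, hB, add_mulVec, dotProduct_add,
        lap_form w s hsymm (fun i j h => hsval i j (hadj i j h)), smul_mulVec, dotProduct_smul,
        smul_eq_mul] at h1
      have h2 : g i ⬝ᵥ (Matrix.diagonal μ *ᵥ g i) = ∑ x, μ x * g i x ^ 2 := by
        simp only [dotProduct, mulVec_diagonal]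
        apply Finset.sum_congr rfl; intro x _
        ring
      have h3 : 0 ≤ g i ⬝ᵥ (Matrix.diagonal κ *ᵥ g i) := by
        simp only [dotProduct, mulVec_diagonal]
        apply Finset.sum_nonneg; intro x _
        nlinarith [mul_nonneg (hκ x) (sq_nonneg (g i x))]
      rw [h2] at h1
      linarith
  choose V₁ V₂ hd hne hsupp hle using hsw
  have : Nonempty (Fin (k - l)) := ⟨⟨0, by omega⟩⟩
  have hnum : ∀ A C : Finset (Fin n), 0 ≤ signedBipartiteness w s μ A C := by
    intro A C
    unfold signedBipartiteness posEdgeWeight negEdgeWeight boundaryWeight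
    have hite : ∀ (q : Prop) [Decidable q] (x y : Fin n), 0 ≤ if q then w x y else 0 := by
      intro q _ x y
      split_ifs
      · exact hw0 x y
      · exact le_rfl
    have hdd : ∀ (A C : Finset (Fin n)) (f : Fin n → Fin n → ℝ), (∀ x y, 0 ≤ f x y) →
        0 ≤ ∑ x ∈ A, ∑ y ∈ C, f x y := fun A C f h =>
      Finset.sum_nonneg fun x _ => Finset.sum_nonneg fun y _ => h x y
    apply div_nonneg
    · have a1 := hdd A C _ (fun x y => hite (s x y = 1) x y)
      have a2 := hdd A A _ (fun x y => hite (s x y = -1) x y)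
      have a3 := hdd C C _ (fun x y => hite (s x y = -1) x y)
      have a4 := hdd (A ∪ C) (A ∪ C)ᶜ w hw0
      linarith
    · exact Finset.sum_nonneg fun x _ => (hμ x).le
  unfold signedCheeger
  apply csInf_le_of_le (b := ⨆ i, signedBipartiteness w s μ (V₁ i) (V₂ i))
  · refine ⟨0, ?_⟩
    rintro x ⟨q, -, -, rfl⟩
    exact Real.iSup_nonneg fun i => hnum _ _
  · refine ⟨fun i => (V₁ i, V₂ i), fun i => ⟨hd i, hne i⟩, ?_, rfl⟩
    intro i j hij
    rw [Finset.disjoint_left]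
    intro x hx hx'
    rcases gd i j hij x with h | h
    · exact hsupp i x hx h
    · exact hsupp j x hx' h
  · exact ciSup_le hle
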